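/- RNN lower bound for the copying problem: fix K ∈ ℕ₊ and ε ∈ (0, 1/2), and let ρ(t) = 1 if t = 2^K and 0 otherwise. Suppose u(t) = cᵀW^{t−1}U is an m²-term exponential sum (W ∈ ℝ^{m×m} diagonalisable with positive real eigenvalues, c, U ∈ ℝ^m) satisfying sup_{t≥0}|ρ(t) − u(t)| < ε. Then m² > 2^{K−1}·(1 − 2ε)/(1 + ε). -/

import Mathlib

open Matrix

/-- Auerbach / Fekete lemma for a finite spanning family. -/
lemma auerbach_span {E : Type*} [AddCommGroup E] [Module ℝ E] [FiniteDimensional ℝ E] (L : ℕ)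
    (φ : Fin L → E) (hsp : Submodule.span ℝ (Set.range φ) = ⊤) :
    ∃ (I : Fin (Module.finrank ℝ E) → Fin L) (l : Fin (Module.finrank ℝ E) → (E →ₗ[ℝ] ℝ)),
      (∀ j s, |l j (φ s)| ≤ 1) ∧ ∀ x, x = ∑ j, l j x • φ (I j) := by
  classical
  let b := Module.finBasis ℝ E
  have key : ∃ I0 : Fin (Module.finrank ℝ E) → Fin L, b.det (φ ∘ I0) ≠ 0 := by
    obtain ⟨f, hf, hfs, hfl⟩ := Submodule.exists_fun_fin_finrank_span_eq ℝ (Set.range φ)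
    have e : Module.finrank ℝ (Submodule.span ℝ (Set.range φ)) = Module.finrank ℝ E := by
      rw [hsp]; exact finrank_top ℝ E
    choose g hg using hf
    refine ⟨fun i => g (Fin.cast e.symm i), ?_⟩
    have h2 : (φ ∘ fun i => g (Fin.cast e.symm i)) = f ∘ (Fin.cast e.symm) := by
      ext i; simp [hg]
    have hli : LinearIndependent ℝ (f ∘ Fin.cast e.symm) :=
      hfl.comp _ (Fin.cast_injective _)
    have hspan : Submodule.span ℝ (Set.range (f ∘ Fin.cast e.symm)) = ⊤ := by
      have hr : Set.range (f ∘ Fin.cast e.symm) = Set.range f :=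
        (finCongr e.symm).surjective.range_comp f
      rw [hr, hfs, hsp]
    rw [h2]
    exact ((Module.Basis.is_basis_iff_det b).1 ⟨hli, hspan⟩).ne_zero
  obtain ⟨I0, hI0⟩ := key
  haveI : Nonempty (Fin (Module.finrank ℝ E) → Fin L) := ⟨I0⟩
  obtain ⟨I, hI⟩ := Finite.exists_max
    (fun I : Fin (Module.finrank ℝ E) → Fin L => |b.det (φ ∘ I)|)
  have hpos : 0 < |b.det (φ ∘ I)| := lt_of_lt_of_le (abs_pos.2 hI0) (hI I0)
  have hu : IsUnit (b.det (φ ∘ I)) := (abs_pos.1 hpos).isUnit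
  obtain ⟨hli, hspan⟩ := (Module.Basis.is_basis_iff_det b).2 hu
  let B := Module.Basis.mk hli hspan.ge
  refine ⟨I, fun j => B.coord j, ?_, ?_⟩
  · intro j s
    have h := congrArg (fun T => T (φ s))
      (Module.Basis.det_smul_mk_coord_eq_det_update b hli hspan.ge j)
    simp only [LinearMap.smul_apply, smul_eq_mul] at h
    have h3 : Function.update (φ ∘ I) j (φ s) = φ ∘ (Function.update I j s) := by
      rw [Function.comp_update]
    have h4 : b.det (φ ∘ I) * B.coord j (φ s) = b.det (φ ∘ Function.update I j s) := by
      rw [← h3]; exact h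
    have h5 := hI (Function.update I j s)
    simp only [← h4, abs_mul] at h5
    nlinarith [abs_nonneg (B.coord j (φ s))]
  · intro x
    have h := B.sum_repr x
    rw [← h]
    simp only [B.sum_repr]
    conv_lhs => rw [← B.sum_repr x]
    simp [B]

/-- Auerbach / Fekete lemma for a finite family of vectors in `ℝ^m`. -/
lemma auerbach_fin (m L : ℕ) (φ : Fin L → (Fin m → ℝ)) :
    ∃ (n : ℕ) (_ : n ≤ m) (I : Fin n → Fin L) (a : Fin n → Fin m → ℝ),
      (∀ j s, |∑ i, a j i * φ s i| ≤ 1) ∧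
      ∀ s, φ s = ∑ j, (∑ i, a j i * φ s i) • φ (I j) := by
  classical
  let S := Submodule.span ℝ (Set.range φ)
  let ψ : Fin L → S := fun s => ⟨φ s, Submodule.subset_span ⟨s, rfl⟩⟩
  have hψ : Submodule.span ℝ (Set.range ψ) = ⊤ := by
    have := Submodule.span_span_coe_preimage (R := ℝ) (s := Set.range φ)
    convert this using 2
    ext x
    simp only [Set.mem_range, Set.mem_preimage, ψ]
    constructor
    · rintro ⟨s, rfl⟩; exact ⟨s, rfl⟩
    · rintro ⟨s, hs⟩; exact ⟨s, Subtype.ext hs⟩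
  obtain ⟨I, l, h1, h2⟩ := auerbach_span L ψ hψ
  choose g hg using fun j => LinearMap.exists_extend (l j)
  have hv : ∀ j s, ∑ i, g j (Pi.single i 1) * φ s i = l j (ψ s) := by
    intro j s
    have : l j (ψ s) = g j (φ s) := by rw [← hg j]; rfl
    rw [this, LinearMap.pi_apply_eq_sum_univ (g j) (φ s)]
    refine Finset.sum_congr rfl fun i _ => ?_
    rw [smul_eq_mul, mul_comm]
    congr 2
    ext k; simp [Pi.single_apply, eq_comm]
  refine ⟨_, ?_, I, fun j i => g j (Pi.single i 1), ?_, ?_⟩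
  · simpa using Submodule.finrank_le S
  · intro j s; rw [hv]; exact h1 j s
  · intro s
    simp only [hv]
    have := congrArg (Subtype.val) (h2 (ψ s))
    simpa [ψ] using this

/-- A telescoping sum of one strict sign forces a term of that sign. -/
lemma exists_step (g : ℕ → ℝ) (a b : ℕ) (hab : a < b) (h : g a < g b) :
    ∃ s, a ≤ s ∧ s < b ∧ g s < g (s + 1) := by
  by_contra hc
  push Not at hc
  have : ∀ k, a + k ≤ b → g (a + k) ≤ g a := by
    intro k
    induction k with
    | zero => intro _; simp
    | succ k ih =>
      intro hk
      exact (hc (a + k) (by omega) (by omega)).trans (ih (by omega))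
  have := this (b - a) (by omega)
  rw [show a + (b - a) = b by omega] at this
  linarith

/-- Discrete Descartes rule: an `m`-term positive exponential sum has no `m+1` alternating points. -/
lemma descartes (m : ℕ) : ∀ (γ a : Fin m → ℝ) (_ : ∀ i, 0 < γ i) (σ : ℝ) (s : ℕ → ℕ)
    (_ : ∀ j < m, s j < s (j + 1)),
    ¬ ∀ j ≤ m, 0 < σ * (-1) ^ j * ∑ i, a i * γ i ^ (s j) := by
  induction m with
  | zero => intro γ a _ σ s _ h; simpa using h 0 le_rfl
  | succ m ih =>
    intro γ a hγ σ s hs h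
    let r := γ (Fin.last m)
    have hr : 0 < r := hγ _
    let g : ℕ → ℝ := fun t => (∑ i, a i * γ i ^ t) / r ^ t
    have hg : ∀ t, g (t + 1) - g t =
        ∑ i : Fin m, (a i.castSucc * (γ i.castSucc / r - 1)) * (γ i.castSucc / r) ^ t := by
      intro t
      simp only [g, Finset.sum_div, ← Finset.sum_sub_distrib]
      rw [Fin.sum_univ_castSucc]
      have : a (Fin.last m) * γ (Fin.last m) ^ (t + 1) / r ^ (t + 1)
          - a (Fin.last m) * γ (Fin.last m) ^ t / r ^ t = 0 := by
        change a (Fin.last m) * r ^ (t + 1) / r ^ (t + 1) - a (Fin.last m) * r ^ t / r ^ t = 0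
        field_simp; ring
      rw [this, add_zero]
      refine Finset.sum_congr rfl fun i _ => ?_
      rw [div_pow]
      field_simp
      ring
    have hgs : ∀ j ≤ m + 1, 0 < σ * (-1) ^ j * g (s j) := by
      intro j hj
      have := h j hj
      simp only [g]
      rw [← mul_div_assoc]
      positivity
    have hex : ∀ j, ∃ t, j ≤ m → s j ≤ t ∧ t < s (j + 1) ∧
        0 < (-σ) * (-1) ^ j * (g (t + 1) - g t) := by
      intro j
      by_cases hj : j ≤ m
      · have h1 := hgs j (by omega)
        have h2 := hgs (j + 1) (by omega)
        rw [pow_succ] at h2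
        obtain ⟨t, ht1, ht2, ht3⟩ := exists_step (fun t => (-σ) * (-1) ^ j * g t) (s j) (s (j + 1))
          (hs j (by omega)) (by linarith)
        refine ⟨t, fun _ => ⟨ht1, ht2, ?_⟩⟩
        linarith
      · exact ⟨0, fun h => absurd h hj⟩
    choose t ht using hex
    refine ih (fun i => γ i.castSucc / r) (fun i => a i.castSucc * (γ i.castSucc / r - 1))
      (fun i => div_pos (hγ _) hr) (-σ) t ?_ ?_
    · intro j hj
      exact (ht j (by omega)).2.1.trans_le (ht (j + 1) (by omega)).1
    · intro j hj
      rw [← hg]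
      exact (ht j hj).2.2

/-- Total variation is controlled by the number of alternations of the increments. -/
lemma variation (v : ℕ → ℝ) (M : ℝ) (L : ℕ) (hv : ∀ s ≤ L, |v s| ≤ M) : ∀ l ≤ L,
    (∑ s ∈ Finset.range l, |v (s + 1) - v s| = 0) ∨
    ∃ (k : ℕ) (σ : ℝ) (s : ℕ → ℕ) (b : ℕ), |σ| = 1 ∧ b ≤ L ∧ (∀ j < k, s j < s (j + 1)) ∧ s k < l ∧
      (∀ j ≤ k, 0 < σ * (-1) ^ j * (v (s j + 1) - v (s j))) ∧
      ∑ s ∈ Finset.range l, |v (s + 1) - v s| ≤ 2 * M * k + σ * (-1) ^ k * (v l - v b) := by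
  intro l
  induction l with
  | zero => intro _; left; simp
  | succ l ih =>
    intro hl
    rcases ih (by omega) with h0 | ⟨k, σ, s, b, hσ, hb, hs, hsl, halt, hsum⟩
    · rcases lt_trichotomy (v (l + 1) - v l) 0 with h | h | h
      · right
        refine ⟨0, -1, fun _ => l, l, by simp, by omega, by simp, by simp, ?_, ?_⟩
        · intro j hj
          obtain rfl : j = 0 := by omega
          simp only [pow_zero]; linarith
        · rw [Finset.sum_range_succ, h0, abs_of_neg h]; simp
      · left
        rw [Finset.sum_range_succ, h0, h]; simp
      · right
        refine ⟨0, 1, fun _ => l, l, by simp, by omega, by simp, by simp, ?_, ?_⟩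
        · intro j hj
          obtain rfl : j = 0 := by omega
          simp only [pow_zero]; linarith
        · rw [Finset.sum_range_succ, h0, abs_of_pos h]; simp
    · right
      have hτ : |σ * (-1) ^ k| = 1 := by simp [abs_mul, hσ]
      have habs : |v (l + 1) - v l| = |σ * (-1) ^ k * (v (l + 1) - v l)| := by
        rw [abs_mul, hτ, one_mul]
      by_cases hd : 0 ≤ σ * (-1) ^ k * (v (l + 1) - v l)
      · refine ⟨k, σ, s, b, hσ, hb, hs, by omega, halt, ?_⟩
        rw [Finset.sum_range_succ, habs, abs_of_nonneg hd]
        linarith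
      · push Not at hd
        refine ⟨k + 1, σ, fun j => if j ≤ k then s j else l, l, hσ, by omega, ?_, by simp, ?_, ?_⟩
        · intro j hj
          by_cases hjk : j + 1 ≤ k
          · simp only [hjk, show j ≤ k by omega, if_true]; exact hs j (by omega)
          · obtain rfl : j = k := by omega
            simpa using hsl
        · intro j hj
          by_cases hjk : j ≤ k
          · simp only [hjk, if_true]; exact halt j hjk
          · obtain rfl : j = k + 1 := by omega
            simp only [hjk, if_false, pow_succ]
            linarith
        · rw [Finset.sum_range_succ, habs, abs_of_neg hd]
          have h1 : σ * (-1) ^ k * (v l - v b) ≤ 2 * M := by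
            calc _ ≤ |σ * (-1) ^ k * (v l - v b)| := le_abs_self _
              _ = |v l - v b| := by rw [abs_mul, hτ, one_mul]
              _ ≤ |v l| + |v b| := abs_sub _ _
              _ ≤ 2 * M := by linarith [hv l (by omega), hv b hb]
          push_cast
          rw [pow_succ]
          linarith

/-- Total variation of an `m`-term positive exponential sum bounded by `M` on a window. -/
lemma variation_exp (m : ℕ) (γ a : Fin m → ℝ) (hγ : ∀ i, 0 < γ i) (M : ℝ) (L : ℕ)
    (hv : ∀ s ≤ L, |∑ i, a i * γ i ^ s| ≤ M) :
    ∑ s ∈ Finset.range L, |∑ i, a i * γ i ^ (s + 1) - ∑ i, a i * γ i ^ s| ≤ 2 * M * m := by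
  have hM : 0 ≤ M := (abs_nonneg _).trans (hv 0 (by omega))
  rcases variation (fun s => ∑ i, a i * γ i ^ s) M L hv L le_rfl with
    h | ⟨k, σ, s, b, hσ, hb, hs, hsl, halt, hsum⟩
  · rw [h]; positivity
  · have hk : k < m := by
      by_contra hk
      push Not at hk
      refine descartes m γ (fun i => a i * (γ i - 1)) hγ σ s (fun j hj => hs j (by omega)) ?_
      intro j hj
      have := halt j (by omega)
      simp only [← Finset.sum_sub_distrib] at this
      convert this using 3
      ring
    have hk' : (k : ℝ) + 1 ≤ m := by exact_mod_cast hk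
    have h1 : σ * (-1) ^ k * ((∑ i, a i * γ i ^ L) - ∑ i, a i * γ i ^ b) ≤ 2 * M := by
      have hτ : |σ * (-1) ^ k| = 1 := by simp [abs_mul, hσ]
      calc _ ≤ |σ * (-1) ^ k * ((∑ i, a i * γ i ^ L) - ∑ i, a i * γ i ^ b)| := le_abs_self _
        _ = |(∑ i, a i * γ i ^ L) - ∑ i, a i * γ i ^ b| := by rw [abs_mul, hτ, one_mul]
        _ ≤ |∑ i, a i * γ i ^ L| + |∑ i, a i * γ i ^ b| := abs_sub _ _
        _ ≤ 2 * M := by linarith [hv L le_rfl, hv b hb]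
    refine hsum.trans ?_
    nlinarith

/-- Discrete Markov-type inequality with constant `2 m²`. -/
lemma markov (m : ℕ) (γ a : Fin m → ℝ) (hγ : ∀ i, 0 < γ i) (M : ℝ)
    (hv : ∀ s : ℕ, |∑ i, a i * γ i ^ s| ≤ M) (N : ℕ) :
    (N + 1 : ℝ) * |∑ i, a i * γ i ^ (N + 1) - ∑ i, a i * γ i ^ N| ≤ 2 * (m : ℝ) ^ 2 * M := by
  have hM : 0 ≤ M := (abs_nonneg _).trans (hv 0)
  obtain ⟨n, hn, I, c, h1, h2⟩ := auerbach_fin m (N + 2) (fun s i => γ i ^ (s : ℕ))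
  let l : Fin n → ℕ → ℝ := fun j s => ∑ i, c j i * γ i ^ s
  have hl : ∀ (t s : ℕ), s < N + 2 →
      ∑ i, a i * γ i ^ (t + s) = ∑ j, l j s * ∑ i, a i * γ i ^ (t + (I j : ℕ)) := by
    intro t s hs
    have h3 : ∀ i, γ i ^ s = ∑ j, l j s * γ i ^ (I j : ℕ) := by
      intro i
      have := congrFun (h2 ⟨s, hs⟩) i
      simpa [l] using this
    simp_rw [Finset.mul_sum]
    rw [Finset.sum_comm]
    refine Finset.sum_congr rfl fun i _ => ?_
    rw [pow_add, h3 i, Finset.mul_sum, Finset.mul_sum]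
    refine Finset.sum_congr rfl fun j _ => ?_
    rw [pow_add]; ring
  have hstep : ∀ s ∈ Finset.range (N + 1),
      |∑ i, a i * γ i ^ (N + 1) - ∑ i, a i * γ i ^ N| ≤ ∑ j, M * |l j (s + 1) - l j s| := by
    intro s hs
    rw [Finset.mem_range] at hs
    have e1 := hl (N - s) (s + 1) (by omega)
    have e2 := hl (N - s) s (by omega)
    rw [show N - s + (s + 1) = N + 1 by omega] at e1
    rw [show N - s + s = N by omega] at e2
    rw [e1, e2, ← Finset.sum_sub_distrib]
    refine (Finset.abs_sum_le_sum_abs _ _).trans (Finset.sum_le_sum fun j _ => ?_)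
    rw [← sub_mul, abs_mul, mul_comm]
    exact mul_le_mul_of_nonneg_right (hv _) (abs_nonneg _)
  have hsum := Finset.sum_le_sum hstep
  rw [Finset.sum_const, Finset.card_range, nsmul_eq_mul, Finset.sum_comm] at hsum
  push_cast at hsum
  refine hsum.trans ?_
  have hj : ∀ j ∈ (Finset.univ : Finset (Fin n)),
      ∑ s ∈ Finset.range (N + 1), M * |l j (s + 1) - l j s| ≤ M * (2 * m) := by
    intro j _
    rw [← Finset.mul_sum]
    refine mul_le_mul_of_nonneg_left ?_ hM
    have := variation_exp m γ (c j) hγ 1 (N + 1)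
      (fun s hs => by simpa using h1 j ⟨s, by omega⟩)
    simpa using this
  refine (Finset.sum_le_sum hj).trans ?_
  rw [Finset.sum_const, Finset.card_univ, Fintype.card_fin, nsmul_eq_mul]
  have hn' : (n : ℝ) ≤ m := by exact_mod_cast hn
  have h0 : 0 ≤ M * (2 * (m : ℝ)) := by positivity
  nlinarith

/-- RNN lower bound for the copying problem: if the linear RNN readout
`u(t) = cᵀ W^{t−1} U` (with `W` diagonalisable with positive eigenvalues)
approximates the impulse `ρ(t) = δ(t − 2^K)` uniformly within `ε < 1/2`,
then `m² > 2^{K−1}(1 − 2ε)/(1 + ε)`. -/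
theorem stmt15 (K m : ℕ) (hK : 1 ≤ K) (ε : ℝ) (hε : 0 < ε) (hε2 : ε < 1 / 2)
    (W P : Matrix (Fin m) (Fin m) ℝ) (dg : Fin m → ℝ) (c U : Fin m → ℝ)
    (hP : IsUnit P.det) (hdg : ∀ i, 0 < dg i)
    (hW : W = P * Matrix.diagonal dg * P⁻¹)
    (happrox : ∀ t : ℕ, 1 ≤ t →
      |(if t = 2 ^ K then (1 : ℝ) else 0) - c ⬝ᵥ (W ^ (t - 1)).mulVec U| < ε) :
    (m : ℝ) ^ 2 > 2 ^ (K - 1) * (1 - 2 * ε) / (1 + ε) := by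
  have hpow : ∀ s : ℕ, W ^ s = P * Matrix.diagonal (fun i => dg i ^ s) * P⁻¹ := by
    intro s
    induction s with
    | zero => simp [Matrix.mul_nonsing_inv P hP]
    | succ s ih =>
      rw [pow_succ, ih, hW]
      have : P * Matrix.diagonal (fun i => dg i ^ s) * P⁻¹ * (P * Matrix.diagonal dg * P⁻¹)
          = P * Matrix.diagonal (fun i => dg i ^ s) * (P⁻¹ * P) * Matrix.diagonal dg * P⁻¹ := by
        simp only [Matrix.mul_assoc]
      rw [this, Matrix.nonsing_inv_mul P hP, Matrix.mul_one, Matrix.mul_assoc P,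
        Matrix.diagonal_mul_diagonal]
      simp only [pow_succ]
  let a : Fin m → ℝ := fun i => (c ᵥ* P) i * (P⁻¹ *ᵥ U) i
  have hu : ∀ s : ℕ, c ⬝ᵥ (W ^ s).mulVec U = ∑ i, a i * dg i ^ s := by
    intro s
    rw [hpow, ← Matrix.mulVec_mulVec, ← Matrix.mulVec_mulVec, Matrix.dotProduct_mulVec]
    simp only [dotProduct, Matrix.mulVec_diagonal, a]
    refine Finset.sum_congr rfl fun i _ => ?_
    ring
  have happ : ∀ s : ℕ, |(if s + 1 = 2 ^ K then (1 : ℝ) else 0) - ∑ i, a i * dg i ^ s| < ε := by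
    intro s
    have := happrox (s + 1) (by omega)
    rwa [Nat.add_sub_cancel, hu] at this
  have hbd : ∀ s : ℕ, |∑ i, a i * dg i ^ s| ≤ 1 + ε := by
    intro s
    have := abs_lt.1 (happ s)
    rw [abs_le]
    split_ifs at this <;> constructor <;> linarith [this.1, this.2]
  have hT : 1 ≤ 2 ^ K := Nat.one_le_two_pow
  have hmk := markov m dg a hdg (1 + ε) hbd (2 ^ K - 1)
  have h1 := abs_lt.1 (happ (2 ^ K - 1))
  have h2 := abs_lt.1 (happ (2 ^ K - 1 + 1))
  rw [if_pos (by omega)] at h1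
  rw [if_neg (by omega)] at h2
  have hcast : (((2 ^ K - 1 : ℕ) : ℝ) + 1) = 2 * 2 ^ (K - 1) := by
    have e : (2 ^ K - 1) + 1 = 2 * 2 ^ (K - 1) := by
      rw [← pow_succ', show K - 1 + 1 = K by omega]; omega
    exact_mod_cast e
  rw [hcast] at hmk
  have h3 : 1 - 2 * ε < |∑ i, a i * dg i ^ (2 ^ K - 1 + 1) - ∑ i, a i * dg i ^ (2 ^ K - 1)| := by
    rw [abs_sub_comm]
    refine lt_of_lt_of_le ?_ (le_abs_self _)
    linarith [h1.1, h1.2, h2.1, h2.2]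
  have hp : (0 : ℝ) < 2 ^ (K - 1) := by positivity
  rw [gt_iff_lt, div_lt_iff₀ (by linarith)]
  have := mul_lt_mul_of_pos_left h3 hp
  linarith
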